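/- Let m ≥ 1, n ≥ 1, D ≥ 1 be integers. For every positive integer N there exists a constant C depending only on m, n, D, N such that the following holds. Let S ⊆ ℝ^n be a finite set with |S| ≤ N and diameter at most 1, and for each x ∈ S let G(x) ⊆ 𝒫⃗ be a nonempty convex set. Then there exists S′ ⊆ S with |S′| ≤ 2^(D·binom(n+m−1, n)) such that ‖(G(x))_{x∈S}‖_{W^m(S)} ≤ C·‖(G(x))_{x∈S′}‖_{W^m(S′)}, where for any finite T ⊆ ℝ^n, ‖(G(x))_{x∈T}‖_{W^m(T)} := inf { ‖(P⃗^x)_{x∈T}‖_{W^m(T)} : P⃗^x ∈ G(x) for all x ∈ T }. -/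

import Mathlib

open scoped BigOperators Classical

noncomputable section

/-- `En n` is Euclidean space `ℝ^n`. -/
abbrev En (n : ℕ) : Type := EuclideanSpace ℝ (Fin n)

/-- First-order partial derivative `∂_i f` in the `i`-th coordinate direction. -/
noncomputable def pd1 {n : ℕ} (i : Fin n) (f : En n → ℝ) : En n → ℝ :=
  fun x => fderiv ℝ f x (EuclideanSpace.single i 1)

/-- Higher-order partial derivative `∂^α f` for a multi-index `α`. -/
noncomputable def pdalpha {n : ℕ} (α : Fin n → ℕ) (f : En n → ℝ) : En n → ℝ :=
  (List.finRange n).foldr (fun i g => (pd1 i)^[α i] g) f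

/-- First-order partial derivative within a set `s`. -/
noncomputable def pd1W {n : ℕ} (s : Set (En n)) (i : Fin n) (f : En n → ℝ) : En n → ℝ :=
  fun x => fderivWithin ℝ f s x (EuclideanSpace.single i 1)

/-- Higher-order partial derivative `∂^α f` within a set `s`. -/
noncomputable def pdalphaW {n : ℕ} (s : Set (En n)) (α : Fin n → ℕ) (f : En n → ℝ) : En n → ℝ :=
  (List.finRange n).foldr (fun i g => (pd1W s i)^[α i] g) f

/-- `∂^α` of a multivariate polynomial (formal derivative). -/
noncomputable def polyPD {n : ℕ} (α : Fin n → ℕ) (p : MvPolynomial (Fin n) ℝ) :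
    MvPolynomial (Fin n) ℝ :=
  (List.finRange n).foldr (fun i q => (fun r => MvPolynomial.pderiv i r)^[α i] q) p

/-- The value `∂^α p (x)` of the `α`-th derivative of a polynomial at `x`. -/
noncomputable def polyPDval {n : ℕ} (α : Fin n → ℕ) (p : MvPolynomial (Fin n) ℝ) (x : En n) : ℝ :=
  MvPolynomial.eval (fun i => x i) (polyPD α p)

/-- The `(m-1)`-jet (Taylor polynomial of degree `≤ m-1`) of `f` at `x`. -/
noncomputable def jetScalar (m : ℕ) {n : ℕ} (f : En n → ℝ) (x : En n) :
    MvPolynomial (Fin n) ℝ :=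
  ∑ α ∈ (Finset.univ : Finset (Fin n → Fin m)).filter (fun α => (∑ i, (α i : ℕ)) ≤ m - 1),
    MvPolynomial.C (pdalpha (fun i => (α i : ℕ)) f x / ((∏ i, Nat.factorial (α i : ℕ) : ℕ) : ℝ))
      * ∏ i, (MvPolynomial.X i - MvPolynomial.C (x i)) ^ ((α i : ℕ))

/-- The `(m-1)`-jet of `f` at `x`, with derivatives taken within a set `s`. -/
noncomputable def jetScalarW (m : ℕ) {n : ℕ} (s : Set (En n)) (f : En n → ℝ) (x : En n) :
    MvPolynomial (Fin n) ℝ :=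
  ∑ α ∈ (Finset.univ : Finset (Fin n → Fin m)).filter (fun α => (∑ i, (α i : ℕ)) ≤ m - 1),
    MvPolynomial.C (pdalphaW s (fun i => (α i : ℕ)) f x / ((∏ i, Nat.factorial (α i : ℕ) : ℕ) : ℝ))
      * ∏ i, (MvPolynomial.X i - MvPolynomial.C (x i)) ^ ((α i : ℕ))

/-- The vector-valued `(m-1)`-jet `J_x F ∈ 𝒫⃗` of `F : ℝ^n → ℝ^D` at `x`. -/
noncomputable def jetD (m : ℕ) {n D : ℕ} (F : En n → Fin D → ℝ) (x : En n) :
    Fin D → MvPolynomial (Fin n) ℝ :=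
  fun j => jetScalar m (fun y => F y j) x

/-- The vector-valued `(m-1)`-jet of `F` at `x`, derivatives within `s`. -/
noncomputable def jetDW (m : ℕ) {n D : ℕ} (s : Set (En n)) (F : En n → Fin D → ℝ) (x : En n) :
    Fin D → MvPolynomial (Fin n) ℝ :=
  fun j => jetScalarW m s (fun y => F y j) x

/-- Truncation of a polynomial to total degree `≤ k`. -/
noncomputable def truncDeg {n : ℕ} (k : ℕ) (p : MvPolynomial (Fin n) ℝ) :
    MvPolynomial (Fin n) ℝ :=
  ∑ s ∈ p.support.filter (fun s => (s.sum fun _ e => e) ≤ k),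
    MvPolynomial.monomial s (MvPolynomial.coeff s p)

/-- The degree-`k` Taylor truncation of a polynomial at `x` (the jet `J_x p` of order `k`). -/
noncomputable def taylorTrunc {n : ℕ} (k : ℕ) (x : En n) (p : MvPolynomial (Fin n) ℝ) :
    MvPolynomial (Fin n) ℝ :=
  MvPolynomial.bind₁ (fun i => MvPolynomial.X i - MvPolynomial.C (x i))
    (truncDeg k (MvPolynomial.bind₁ (fun i => MvPolynomial.X i + MvPolynomial.C (x i)) p))

/-- The ring multiplication `p ⊙_x q := J_x(pq)` on degree-`k` jets at `x`. -/
noncomputable def odot {n : ℕ} (k : ℕ) (x : En n) (p q : MvPolynomial (Fin n) ℝ) :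
    MvPolynomial (Fin n) ℝ :=
  taylorTrunc k x (p * q)

/-- `(Γ x M)_{x ∈ E, M > 0}` is a shape field with jets of degree `≤ k` and `d` components:
each `Γ x M` is a convex set of `d`-tuples of polynomials of degree `≤ k`, monotone in `M`. -/
def IsShapeField {N : ℕ} (k d : ℕ) (E : Finset (En N))
    (Γ : En N → ℝ → Set (Fin d → MvPolynomial (Fin N) ℝ)) : Prop :=
  (∀ x ∈ E, ∀ M : ℝ, 0 < M → Convex ℝ (Γ x M)) ∧
  (∀ x ∈ E, ∀ M : ℝ, 0 < M → ∀ P ∈ Γ x M, ∀ j, (P j).totalDegree ≤ k) ∧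
  (∀ x ∈ E, ∀ M' M : ℝ, 0 < M' → M' ≤ M → Γ x M' ⊆ Γ x M)

/-- `(C_w, δmax)`-convexity of a shape field with jets of degree `≤ k`. -/
def SFConvex {N : ℕ} (k d : ℕ) (E : Finset (En N))
    (Γ : En N → ℝ → Set (Fin d → MvPolynomial (Fin N) ℝ)) (Cw δmax : ℝ) : Prop :=
  ∀ δ : ℝ, 0 < δ → δ ≤ δmax → ∀ x ∈ E, ∀ M : ℝ, 0 < M →
    ∀ P₁ P₂ : Fin d → MvPolynomial (Fin N) ℝ, P₁ ∈ Γ x M → P₂ ∈ Γ x M →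
    ∀ Q₁ Q₂ : MvPolynomial (Fin N) ℝ, Q₁.totalDegree ≤ k → Q₂.totalDegree ≤ k →
    (∀ α : Fin N → ℕ, (∑ i, α i) ≤ k → ∀ j,
      |polyPDval α (P₁ j - P₂ j) x| ≤ M * δ ^ (k + 1 - ∑ i, α i)) →
    (∀ α : Fin N → ℕ, (∑ i, α i) ≤ k →
      |polyPDval α Q₁ x| ≤ δ ^ (-((∑ i, α i : ℕ) : ℤ)) ∧
      |polyPDval α Q₂ x| ≤ δ ^ (-((∑ i, α i : ℕ) : ℤ))) →
    odot k x Q₁ Q₁ + odot k x Q₂ Q₂ = 1 →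
    (fun j => odot k x (odot k x Q₁ Q₁) (P₁ j) + odot k x (odot k x Q₂ Q₂) (P₂ j))
      ∈ Γ x (Cw * M)

/-- `‖(P^x)_{x ∈ S}‖_{Ẇ^m(S)} ≤ M` : the homogeneous Whitney seminorm bound. -/
def WSemiLE (m : ℕ) {N d : ℕ} (S : Finset (En N))
    (P : En N → Fin d → MvPolynomial (Fin N) ℝ) (M : ℝ) : Prop :=
  ∀ x ∈ S, ∀ y ∈ S, x ≠ y → ∀ α : Fin N → ℕ, (∑ i, α i) ≤ m - 1 → ∀ j,
    |polyPDval α (P x j - P y j) x| ≤ M * dist x y ^ (m - ∑ i, α i)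

/-- The homogeneous Whitney seminorm `‖(P^x)_{x ∈ S}‖_{Ẇ^m(S)}`. -/
noncomputable def WNormHomog (m : ℕ) {N d : ℕ} (S : Finset (En N))
    (P : En N → Fin d → MvPolynomial (Fin N) ℝ) : ℝ :=
  sSup {r : ℝ | ∃ x ∈ S, ∃ y ∈ S, x ≠ y ∧ ∃ α : Fin N → ℕ, (∑ i, α i) ≤ m - 1 ∧ ∃ j : Fin d,
    r = |polyPDval α (P x j - P y j) x| / dist x y ^ (m - ∑ i, α i)}

/-- The lower-order part of the Whitney norm. -/
noncomputable def WNormLow (m : ℕ) {N d : ℕ} (S : Finset (En N))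
    (P : En N → Fin d → MvPolynomial (Fin N) ℝ) : ℝ :=
  sSup {r : ℝ | ∃ x ∈ S, ∃ α : Fin N → ℕ, (∑ i, α i) ≤ m - 1 ∧ ∃ j : Fin d,
    r = |polyPDval α (P x j) x|}

/-- The Whitney norm `‖(P^x)_{x ∈ S}‖_{W^m(S)}`. -/
noncomputable def WNormFull (m : ℕ) {N d : ℕ} (S : Finset (En N))
    (P : En N → Fin d → MvPolynomial (Fin N) ℝ) : ℝ :=
  WNormLow m S P + WNormHomog m S P

/-- `‖F‖_{C^m} ≤ M`: all partials of order `≤ m` of all components bounded by `M`. -/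
def CmLE (m : ℕ) {n D : ℕ} (F : En n → Fin D → ℝ) (M : ℝ) : Prop :=
  ∀ α : Fin n → ℕ, (∑ i, α i) ≤ m → ∀ x : En n, ∀ j, |pdalpha α (fun y => F y j) x| ≤ M

/-- `‖F‖_{Ċ^m} ≤ M`: all partials of order `= m` of all components bounded by `M`. -/
def CmHomogLE (m : ℕ) {n D : ℕ} (F : En n → Fin D → ℝ) (M : ℝ) : Prop :=
  ∀ α : Fin n → ℕ, (∑ i, α i) = m → ∀ x : En n, ∀ j, |pdalpha α (fun y => F y j) x| ≤ M

/-- `‖F‖_{C^{m-1,1}} ≤ M`. -/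
def Cm11LE (m : ℕ) {n D : ℕ} (F : En n → Fin D → ℝ) (M : ℝ) : Prop :=
  (∀ α : Fin n → ℕ, (∑ i, α i) ≤ m - 1 → ∀ x : En n, ∀ j,
    |pdalpha α (fun y => F y j) x| ≤ M) ∧
  (∀ α : Fin n → ℕ, (∑ i, α i) = m - 1 → ∀ j, ∀ x y : En n,
    |pdalpha α (fun z => F z j) x - pdalpha α (fun z => F z j) y| ≤ M * dist x y)

/-- A closed cube in `ℝ^n` with lower corner `a` and side length `δ`. -/
def cube {n : ℕ} (a : En n) (δ : ℝ) : Set (En n) := {y | ∀ i, a i ≤ y i ∧ y i ≤ a i + δ}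

/-- The embedding `ℝ^n → ℝ^{n+D}`, `x ↦ (x, 0)`. -/
noncomputable def embed (n D : ℕ) (x : En n) : En (n + D) :=
  (EuclideanSpace.equiv (Fin (n + D)) ℝ).symm
    (Fin.append (fun i : Fin n => x i) (fun _ : Fin D => (0 : ℝ)))

/-- The projection `ℝ^{n+D} → ℝ^n`, `(x, ξ) ↦ x`. -/
noncomputable def projn (n D : ℕ) (z : En (n + D)) : En n :=
  (EuclideanSpace.equiv (Fin n) ℝ).symm (fun i => z (Fin.castAdd D i))

/-- Restriction of a polynomial on `ℝ^{n+D}` to `ℝ^n × {0}`, as a polynomial on `ℝ^n`. -/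
noncomputable def restrict0 (n D : ℕ) (p : MvPolynomial (Fin (n + D)) ℝ) :
    MvPolynomial (Fin n) ℝ :=
  MvPolynomial.aeval
    (Fin.append (fun i : Fin n => (MvPolynomial.X i : MvPolynomial (Fin n) ℝ))
      (fun _ : Fin D => 0)) p


/-- The selection norm `‖(G(x))_{x∈T}‖_{W^m(T)}`: the infimum of Whitney norms of
selections of the family `(G x)_{x ∈ T}`. -/
noncomputable def selNormFull (m : ℕ) {N d : ℕ} (T : Finset (En N))
    (G : En N → Set (Fin d → MvPolynomial (Fin N) ℝ)) : ℝ :=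
  sInf {r : ℝ | ∃ P : En N → Fin d → MvPolynomial (Fin N) ℝ,
    (∀ x ∈ T, P x ∈ G x) ∧ r = WNormFull m T P}


/-! ### Formal derivatives -/

/-- `polyPD` along a list of coordinates. -/
def plistPD {n : ℕ} (l : List (Fin n)) (α : Fin n → ℕ) :
    MvPolynomial (Fin n) ℝ →ₗ[ℝ] MvPolynomial (Fin n) ℝ :=
  (l.map (fun i => ((MvPolynomial.pderiv i).toLinearMap :
    Module.End ℝ (MvPolynomial (Fin n) ℝ)) ^ (α i))).prod

lemma polyPD_eq_plistPD {n : ℕ} (α : Fin n → ℕ) (p : MvPolynomial (Fin n) ℝ) :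
    polyPD α p = plistPD (List.finRange n) α p := by
  unfold polyPD plistPD
  induction List.finRange n with
  | nil => simp
  | cons i l ih =>
    simp only [List.foldr_cons, List.map_cons, List.prod_cons, Module.End.mul_apply, ih]
    rw [Module.End.pow_apply]
    rfl

lemma pderiv_comm_real {n : ℕ} (i j : Fin n) (p : MvPolynomial (Fin n) ℝ) :
    MvPolynomial.pderiv i (MvPolynomial.pderiv j p)
      = MvPolynomial.pderiv j (MvPolynomial.pderiv i p) := by
  ext s
  simp only [MvPolynomial.coeff_pderiv]
  by_cases h : i = j
  · subst h; rfl
  · have h' : j ≠ i := fun e => h e.symm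
    rw [add_right_comm]
    simp [h, h']
    ring

lemma commute_pderiv {n : ℕ} (i j : Fin n) :
    Commute ((MvPolynomial.pderiv i).toLinearMap : Module.End ℝ (MvPolynomial (Fin n) ℝ))
      (MvPolynomial.pderiv j).toLinearMap := by
  apply LinearMap.ext
  intro p
  simpa using pderiv_comm_real i j p

lemma pderiv_plistPD {n : ℕ} (i : Fin n) (α : Fin n → ℕ) (l : List (Fin n)) (hl : l.Nodup) :
    (i ∉ l → plistPD l (Function.update α i (α i + 1)) = plistPD l α) ∧
    (i ∈ l → plistPD l (Function.update α i (α i + 1)) =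
      ((MvPolynomial.pderiv i).toLinearMap : Module.End ℝ (MvPolynomial (Fin n) ℝ))
        * plistPD l α) := by
  induction l with
  | nil => simp [plistPD]
  | cons j l ih =>
    obtain ⟨hj, hl'⟩ := List.nodup_cons.mp hl
    obtain ⟨ih1, ih2⟩ := ih hl'
    have hc : ∀ β, plistPD (j :: l) β =
      (((MvPolynomial.pderiv j).toLinearMap :
    Module.End ℝ (MvPolynomial (Fin n) ℝ)) ^ (β j)) * plistPD l β := by
      intro β; simp [plistPD]
    constructor
    · intro hi
      have h1 : i ≠ j := fun e => hi (by simp [e])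
      rw [hc, hc, ih1 (fun e => hi (by simp [e])), Function.update_of_ne h1.symm]
    · intro hi
      rw [hc, hc]
      by_cases h : i = j
      · subst h
        rw [ih1 hj, Function.update_self, pow_succ', mul_assoc]
      · have hi' : i ∈ l := by simpa [h] using hi
        rw [ih2 hi', Function.update_of_ne (fun e => h e.symm), ← mul_assoc, ← mul_assoc,
          ((commute_pderiv i j).pow_right (α j)).eq]

lemma pderiv_polyPD {n : ℕ} (i : Fin n) (α : Fin n → ℕ) (p : MvPolynomial (Fin n) ℝ) :
    MvPolynomial.pderiv i (polyPD α p) = polyPD (Function.update α i (α i + 1)) p := by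
  rw [polyPD_eq_plistPD, polyPD_eq_plistPD,
    (pderiv_plistPD i α _ (List.nodup_finRange n)).2 (List.mem_finRange i)]
  rfl

/-- `∂^α` at a point as a linear functional. -/
def pdvalL {n : ℕ} (α : Fin n → ℕ) (x : En n) : MvPolynomial (Fin n) ℝ →ₗ[ℝ] ℝ :=
  (MvPolynomial.aeval (fun i => x i) : MvPolynomial (Fin n) ℝ →ₐ[ℝ] ℝ).toLinearMap ∘ₗ
    plistPD (List.finRange n) α

lemma polyPDval_eq {n : ℕ} (α : Fin n → ℕ) (x : En n) (p : MvPolynomial (Fin n) ℝ) :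
    polyPDval α p x = pdvalL α x p := by
  unfold polyPDval pdvalL
  rw [polyPD_eq_plistPD]
  simp [MvPolynomial.aeval_eq_eval]

lemma support_pow_pderiv {n : ℕ} (i : Fin n) (k K t : ℕ) (p : MvPolynomial (Fin n) ℝ)
    (h : ∀ s : Fin n →₀ ℕ, MvPolynomial.coeff s p ≠ 0 → s.degree + t ≤ K) :
    ∀ s : Fin n →₀ ℕ, MvPolynomial.coeff s
      ((((MvPolynomial.pderiv i).toLinearMap :
        Module.End ℝ (MvPolynomial (Fin n) ℝ)) ^ k) p) ≠ 0 → s.degree + (t + k) ≤ K := by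
  induction k with
  | zero => simpa using h
  | succ k ih =>
    intro s hs
    rw [pow_succ', Module.End.mul_apply] at hs
    simp only [Derivation.coeFn_coe, MvPolynomial.coeff_pderiv] at hs
    have := ih _ (left_ne_zero_of_mul hs)
    simp at this
    omega

lemma support_plistPD {n : ℕ} (α : Fin n → ℕ) (l : List (Fin n)) (K : ℕ)
    (p : MvPolynomial (Fin n) ℝ)
    (h : ∀ s : Fin n →₀ ℕ, MvPolynomial.coeff s p ≠ 0 → s.degree ≤ K) :
    ∀ s : Fin n →₀ ℕ, MvPolynomial.coeff s (plistPD l α p) ≠ 0 →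
      s.degree + (l.map α).sum ≤ K := by
  induction l with
  | nil => simpa [plistPD] using h
  | cons j l ih =>
    intro s hs
    have := support_pow_pderiv j (α j) K _ _ ih s (by simpa [plistPD] using hs)
    simp; omega

lemma polyPD_eq_zero {n : ℕ} (α : Fin n → ℕ) (p : MvPolynomial (Fin n) ℝ)
    (h : p.totalDegree < ∑ i, α i) : polyPD α p = 0 := by
  rw [polyPD_eq_plistPD]
  ext s
  by_contra hs
  have := support_plistPD α (List.finRange n) p.totalDegree p (fun s hs => by
    have := MvPolynomial.le_totalDegree (MvPolynomial.mem_support_iff.mpr hs)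
    exact this) s (by simpa using hs)
  rw [← List.ofFn_eq_map, List.sum_ofFn] at this
  omega

lemma hasDerivAt_eval_line {n : ℕ} (y v : Fin n → ℝ) (p : MvPolynomial (Fin n) ℝ) (t : ℝ) :
    HasDerivAt (fun t : ℝ => MvPolynomial.eval (fun i => y i + t * v i) p)
      (∑ i, v i * MvPolynomial.eval (fun i => y i + t * v i) (MvPolynomial.pderiv i p)) t := by
  induction p using MvPolynomial.induction_on with
  | C a => simpa using hasDerivAt_const t a
  | add p q hp hq =>
    simp only [map_add, mul_add, Finset.sum_add_distrib]
    exact hp.add hq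
  | mul_X p j hp =>
    have hX : HasDerivAt (fun t : ℝ => y j + t * v j) (v j) t := by
      simpa using ((hasDerivAt_id t).mul_const (v j)).const_add (y j)
    have := hp.mul hX
    simp only [map_mul, MvPolynomial.eval_X]
    refine this.congr_deriv ?_
    simp only [MvPolynomial.pderiv_mul, MvPolynomial.pderiv_X, map_add, map_mul,
      MvPolynomial.eval_X, Finset.sum_mul]
    simp only [mul_add (v _), Finset.sum_add_distrib]
    congr 1
    · exact Finset.sum_congr rfl fun i _ => by ring
    · rw [Finset.sum_eq_single j]
      · simp; ring
      · intro i _ hi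
        simp [hi.symm]
      · simp

lemma abs_eval_sub_le {n : ℕ} (x y : En n) (p : MvPolynomial (Fin n) ℝ) (ρ B : ℝ)
    (hρ : dist x y ≤ ρ)
    (hB : ∀ w : En n, dist w y ≤ ρ → ∀ i,
      |MvPolynomial.eval (fun i => w i) (MvPolynomial.pderiv i p)| ≤ B) :
    |MvPolynomial.eval (fun i => x i) p - MvPolynomial.eval (fun i => y i) p| ≤ n * B * ρ := by
  have hρ0 : 0 ≤ ρ := dist_nonneg.trans hρ
  set v : Fin n → ℝ := fun i => x i - y i with hv
  have hvi : ∀ i, |v i| ≤ ρ := fun i => by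
    have := PiLp.norm_apply_le (x - y) i
    rw [← dist_eq_norm] at this
    simpa [hv] using this.trans hρ
  have key := (convex_Icc (0:ℝ) 1).norm_image_sub_le_of_norm_hasDerivWithin_le
    (f := fun t : ℝ => MvPolynomial.eval (fun i => y i + t * v i) p)
    (C := n * B * ρ) (x := 0) (y := 1)
    (fun t _ => (hasDerivAt_eval_line (fun i => y i) v p t).hasDerivWithinAt)
    (fun t ht => ?_) (by simp) (by simp)
  · simpa [hv] using key
  · refine (norm_sum_le _ _).trans ?_
    have : ∀ i ∈ (Finset.univ : Finset (Fin n)),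
        ‖v i * MvPolynomial.eval (fun i => y i + t * v i) (MvPolynomial.pderiv i p)‖
          ≤ B * ρ := by
      intro i _
      have h1 := hB (y + t • (x - y)) (by
        rw [dist_eq_norm, add_sub_cancel_left, norm_smul, ← dist_eq_norm, Real.norm_eq_abs,
          abs_of_nonneg ht.1]
        nlinarith [ht.2, dist_nonneg (x := x) (y := y)]) i
      have h2 : (fun i => (y + t • (x - y)) i) = fun i => y i + t * v i := by
        ext i; simp [hv]
      rw [h2] at h1
      rw [norm_mul, Real.norm_eq_abs, Real.norm_eq_abs, mul_comm]
      exact mul_le_mul h1 (hvi i) (abs_nonneg _) ((abs_nonneg _).trans h1)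
    refine (Finset.sum_le_sum this).trans ?_
    simp [mul_assoc]

/-- Constants for the change of base point. -/
def taylorConst (n : ℕ) : ℕ → ℝ
  | 0 => 0
  | k + 1 => 1 + n * taylorConst n k

lemma taylorConst_nonneg (n k : ℕ) : 0 ≤ taylorConst n k := by
  induction k with
  | zero => simp [taylorConst]
  | succ k ih => simp only [taylorConst]; positivity

lemma taylorConst_mono (n : ℕ) : Monotone (taylorConst n) := by
  apply monotone_nat_of_le_succ
  intro k
  induction k with
  | zero => simp [taylorConst]
  | succ k ih =>
    simp only [taylorConst] at ih ⊢
    gcongr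

lemma taylor_shift {n : ℕ} (m : ℕ) (y : En n) (Q : MvPolynomial (Fin n) ℝ)
    (hQ : Q.totalDegree < m) (M ρ : ℝ)
    (hy : ∀ α : Fin n → ℕ, (∑ i, α i) ≤ m - 1 →
      |polyPDval α Q y| ≤ M * ρ ^ (m - ∑ i, α i)) (k : ℕ) :
    ∀ α : Fin n → ℕ, (∑ i, α i) + k = m → ∀ x : En n, dist x y ≤ ρ →
      |polyPDval α Q x| ≤ taylorConst n k * M * ρ ^ k := by
  induction k with
  | zero =>
    intro α hα x hx
    unfold polyPDval
    rw [polyPD_eq_zero α Q (by omega)]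
    simp [taylorConst]
  | succ k ih =>
    intro α hα x hx
    have hρ0 : 0 ≤ ρ := dist_nonneg.trans hx
    have h1 := abs_eval_sub_le x y (polyPD α Q) ρ (taylorConst n k * M * ρ ^ k) hx (by
      intro w hw i
      rw [pderiv_polyPD]
      refine ih _ ?_ w hw
      have : ∑ j, Function.update α i (α i + 1) j = (∑ j, α j) + 1 := by
        have h := Finset.sum_update_of_mem (Finset.mem_univ i) α (α i + 1)
        have h' := Finset.add_sum_erase Finset.univ α (Finset.mem_univ i)
        rw [h, ← Finset.erase_eq, ← h']
        ring
      omega)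
    have h2 := hy α (by omega)
    have h3 : m - ∑ i, α i = k + 1 := by omega
    rw [h3] at h2
    change |polyPDval α Q x - polyPDval α Q y| ≤ _ at h1
    have h4 : |polyPDval α Q x| ≤ |polyPDval α Q x - polyPDval α Q y| + |polyPDval α Q y| := by
      have := abs_add_le (polyPDval α Q x - polyPDval α Q y) (polyPDval α Q y)
      simpa using this
    refine h4.trans ((add_le_add h1 h2).trans (le_of_eq ?_))
    simp only [taylorConst, pow_succ]
    ring

/-! ### Splitting of finite sets into well separated clusters -/

lemma exists_split {n : ℕ} (N : ℕ) (S : Finset (En n)) (hS : S.card ≤ N) (h2 : 2 ≤ S.card) :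
    ∃ B : Finset (En n), B ⊆ S ∧ B.Nonempty ∧ (S \ B).Nonempty ∧
      ∀ x ∈ S \ B, ∀ y ∈ B, ∀ z ∈ S, ∀ w ∈ S, dist z w ≤ N * dist x y := by
  have hne : (S ×ˢ S).Nonempty := by
    have : S.Nonempty := Finset.card_pos.mp (by omega)
    exact this.product this
  obtain ⟨⟨a, b⟩, hab, hmax⟩ := Finset.exists_max_image (S ×ˢ S) (fun q => dist q.1 q.2) hne
  rw [Finset.mem_product] at hab
  obtain ⟨ha, hb⟩ := hab
  simp only at ha hb
  set δ := dist a b with hδ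
  have hmax' : ∀ z ∈ S, ∀ w ∈ S, dist z w ≤ δ := fun z hz w hw =>
    hmax (z, w) (Finset.mem_product.mpr ⟨hz, hw⟩)
  have hδpos : 0 < δ := by
    obtain ⟨c, hc, e, he, hce⟩ := Finset.one_lt_card.mp (show 1 < S.card by omega)
    exact (dist_pos.mpr hce).trans_le (hmax' c hc e he)
  have hN0 : (0 : ℝ) < N := by exact_mod_cast (show 0 < N by omega)
  -- an empty annulus
  have hgap : ∃ k ∈ Finset.range N, ∀ z ∈ S.erase a,
      ¬ (k * δ / N < dist a z ∧ dist a z ≤ (k + 1) * δ / N) := by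
    by_contra hcon
    push Not at hcon
    choose! g hg using hcon
    have hcard : (S.erase a).card < (Finset.range N).card := by
      rw [Finset.card_erase_of_mem ha, Finset.card_range]; omega
    obtain ⟨k, hk, l, hl, hkl, hgkl⟩ := Finset.exists_ne_map_eq_of_card_lt_of_maps_to hcard
      (f := g) (fun k hk => (hg k hk).1)
    have aux : ∀ k l : ℕ, k ∈ Finset.range N → l ∈ Finset.range N → g k = g l → l ≤ k := by
      intro k l hk hl h
      have h1 := (hg k hk).2.2
      have h2 := (hg l hl).2.1
      rw [h] at h1
      have h3 : (l : ℝ) * δ / N < (k + 1) * δ / N := h2.trans_le h1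
      rw [div_lt_div_iff_of_pos_right hN0, mul_lt_mul_iff_left₀ hδpos] at h3
      have : l < k + 1 := by exact_mod_cast h3
      omega
    exact hkl (le_antisymm (aux l k hl hk hgkl.symm) (aux k l hk hl hgkl))
  obtain ⟨k, hk, hgap⟩ := hgap
  have hkN : (k : ℝ) + 1 ≤ N := by exact_mod_cast Finset.mem_range.mp hk
  have hk0 : 0 ≤ k * δ / N := by positivity
  refine ⟨S.filter (fun z => dist a z ≤ k * δ / N), Finset.filter_subset _ _,
    ⟨a, by simp [ha, hk0]⟩, ⟨b, ?_⟩, ?_⟩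
  · simp only [Finset.mem_sdiff, Finset.mem_filter, hb, true_and, not_le, ← hδ]
    rw [div_lt_iff₀ hN0]
    nlinarith
  · intro x hx y hy z hz w hw
    simp only [Finset.mem_sdiff, Finset.mem_filter, not_and, not_le] at hx hy
    have hx2 := hx.2 hx.1
    have hxa : x ≠ a := by
      rintro rfl
      simp at hx2
      linarith
    have hx3 := hgap x (Finset.mem_erase.mpr ⟨hxa, hx.1⟩)
    have hx4 : (k + 1) * δ / N < dist a x := by
      by_contra h
      exact hx3 ⟨hx2, not_lt.mp h⟩
    have ht : dist a x ≤ dist a y + dist x y := by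
      have := dist_triangle a y x
      rwa [dist_comm y x] at this
    have h5 : δ / N ≤ dist x y := by
      have : (k + 1) * δ / N = k * δ / N + δ / N := by ring
      linarith [hy.2]
    refine (hmax' z hz w hw).trans ?_
    rw [div_le_iff₀ hN0] at h5
    linarith

lemma exists_chain {n : ℕ} (N : ℕ) (k : ℕ) : ∀ S : Finset (En n), S.card ≤ N →
    2 ^ k < 2 * S.card →
    ∃ f : En n → ℕ, (∀ x ∈ S, f x ≤ k) ∧ (∀ i ≤ k, ∃ x ∈ S, f x = i) ∧
      ∀ x ∈ S, ∀ y ∈ S, f x < f y → ∀ z ∈ S, ∀ w ∈ S, f x ≤ f z → f x ≤ f w →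
        dist z w ≤ N * dist x y := by
  induction k with
  | zero =>
    intro S hS h
    obtain ⟨a, ha⟩ := Finset.card_pos.mp (show 0 < S.card by simp at h; omega)
    exact ⟨fun _ => 0, by simp, fun i hi => ⟨a, ha, by simp; omega⟩, by simp⟩
  | succ k ih =>
    intro S hS h
    have h2 : 2 ≤ S.card := by
      have : 1 ≤ 2 ^ k := Nat.one_le_two_pow
      rw [pow_succ] at h
      omega
    obtain ⟨B₀, hB₀S, hB₀, hB₀', hsep₀⟩ := exists_split N S hS h2
    -- choose the larger half
    obtain ⟨B, hBS, hB', hcard, hsep⟩ : ∃ B : Finset (En n), B ⊆ S ∧ (S \ B).Nonempty ∧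
        S.card ≤ 2 * B.card ∧
        ∀ x ∈ S \ B, ∀ y ∈ B, ∀ z ∈ S, ∀ w ∈ S, dist z w ≤ N * dist x y := by
      have hc := Finset.card_sdiff_add_card_eq_card hB₀S
      by_cases hh : S.card ≤ 2 * B₀.card
      · exact ⟨B₀, hB₀S, hB₀', hh, hsep₀⟩
      · refine ⟨S \ B₀, Finset.sdiff_subset, ?_, by omega, ?_⟩
        · rwa [Finset.sdiff_sdiff_eq_self hB₀S]
        · rw [Finset.sdiff_sdiff_eq_self hB₀S]
          intro x hx y hy z hz w hw
          rw [dist_comm x y]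
          exact hsep₀ y hy x hx z hz w hw
    obtain ⟨f, hf1, hf2, hf3⟩ := ih B ((Finset.card_le_card hBS).trans hS) (by
      rw [pow_succ] at h; omega)
    refine ⟨fun x => if x ∈ B then f x + 1 else 0, ?_, ?_, ?_⟩
    · intro x hx
      by_cases hxB : x ∈ B
      · simpa [hxB] using hf1 x hxB
      · simp [hxB]
    · intro i hi
      rcases i with _ | i
      · obtain ⟨a, ha⟩ := hB'
        rw [Finset.mem_sdiff] at ha
        exact ⟨a, ha.1, by simp [ha.2]⟩
      · obtain ⟨x, hx, hxi⟩ := hf2 i (by omega)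
        exact ⟨x, hBS hx, by simp [hx, hxi]⟩
    · intro x hx y hy hxy z hz w hw hxz hxw
      by_cases hyB : y ∈ B
      swap
      · simp [hyB] at hxy
      by_cases hxB : x ∈ B
      · have hzB : z ∈ B := by by_contra hh; simp [hxB, hh] at hxz
        have hwB : w ∈ B := by by_contra hh; simp [hxB, hh] at hxw
        simp only [hxB, hyB, hzB, hwB, if_true] at hxy hxz hxw
        exact hf3 x hxB y hyB (by omega) z hzB w hwB (by omega) (by omega)
      · exact hsep x (Finset.mem_sdiff.mpr ⟨hx, hxB⟩) y hyB z hz w hw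

/-! ### Dimension of the polynomial space and Radon weights -/

lemma finrank_poly_le (n k : ℕ) :
    Module.finrank ℝ (MvPolynomial.restrictTotalDegree (Fin n) ℝ k) ≤ (n + k).choose n := by
  have hb := MvPolynomial.basisRestrictSupport ℝ
    ({ s : Fin n →₀ ℕ | (s.sum fun _ e => e) ≤ k })
  have h1 : Module.finrank ℝ (MvPolynomial.restrictTotalDegree (Fin n) ℝ k)
      = Nat.card { s : Fin n →₀ ℕ | (s.sum fun _ e => e) ≤ k } :=
    Module.finrank_eq_nat_card_basis hb
  rw [h1]
  have h2 : Nat.card ((Finset.univ : Finset (Fin (n + 1))).finsuppAntidiag k)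
      = (n + k).choose n := by
    rw [Nat.card_eq_fintype_card, Fintype.card_coe, Finset.card_finsuppAntidiag_nat_eq_choose]
    simp only [Finset.card_univ, Fintype.card_fin]
    rw [show n + 1 + k - 1 = n + k by omega, Nat.choose_symm_add]
  rw [← h2]
  refine Nat.card_le_card_of_injective
    (fun s => ⟨Finsupp.cons (k - s.1.sum fun _ e => e) s.1, ?_⟩) ?_
  · have hs : (s.1.sum fun _ e => e) ≤ k := s.2
    rw [Finsupp.sum_fintype _ _ (by simp)] at hs
    simp only [Finset.mem_finsuppAntidiag, Finset.subset_univ, and_true]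
    rw [Fin.sum_univ_succ]
    simp only [Finsupp.cons_zero, Finsupp.cons_succ]
    rw [Finsupp.sum_fintype _ _ (by simp)]
    omega
  · intro s t hst
    have := congrArg (fun q => Finsupp.tail q.1) hst
    simp only [Finsupp.tail_cons] at this
    exact Subtype.ext this

lemma exists_radon {n D k K : ℕ} (p : Fin (K + 2) → Fin D → MvPolynomial (Fin n) ℝ)
    (hp : ∀ i j, (p i j).totalDegree ≤ k) (hK : D * (n + k).choose n ≤ K) :
    ∃ c : Bool → Fin (K + 2) → ℝ, (∀ b i, 0 ≤ c b i) ∧ (∀ b, ∑ i, c b i = 1) ∧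
      (∑ i, c true i • p i = ∑ i, c false i • p i) ∧
      (∀ i, c true i = 0 ∨ c false i = 0) := by
  let q : Fin (K + 2) → Fin D → MvPolynomial.restrictTotalDegree (Fin n) ℝ k :=
    fun i j => ⟨p i j, (MvPolynomial.mem_restrictTotalDegree _ _ _).mpr (hp i j)⟩
  have hdep : ¬ AffineIndependent ℝ q := by
    intro h
    have h1 := h.card_le_finrank_succ
    have h2 := Submodule.finrank_le (vectorSpan ℝ (Set.range q))
    have h3 : Module.finrank ℝ (Fin D → MvPolynomial.restrictTotalDegree (Fin n) ℝ k)
        ≤ K := by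
      rw [Module.finrank_pi_fintype]
      simp only [Finset.sum_const, Finset.card_univ, Fintype.card_fin, smul_eq_mul]
      exact (Nat.mul_le_mul_left D (finrank_poly_le n k)).trans hK
    rw [Fintype.card_fin] at h1
    omega
  rw [affineIndependent_iff] at hdep
  push Not at hdep
  obtain ⟨s, w, hw0, hwq, e, hes, hwe⟩ := hdep
  set W : Fin (K + 2) → ℝ := fun i => if i ∈ s then w i else 0 with hW
  have hW0 : ∑ i, W i = 0 := by
    rw [← hw0]
    simp [hW, Finset.sum_ite_mem]
  have hWp : ∑ i, W i • p i = 0 := by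
    have h1 : ∑ i, W i • q i = 0 := by
      rw [← hwq]
      simp [hW, ite_smul, Finset.sum_ite_mem]
    ext1 j
    have h2 := congrArg Subtype.val (congrFun h1 j)
    simpa [Finset.sum_apply, q] using h2
  have hWe : W e ≠ 0 := by simpa [hW, hes] using hwe
  have hpm : ∀ i, max (W i) 0 - max (-W i) 0 = W i := fun i => by
    rcases le_total (W i) 0 with h | h
    · rw [max_eq_right h, max_eq_left (by linarith)]; ring
    · rw [max_eq_left h, max_eq_right (by linarith)]; ring
  set σ := ∑ i, max (W i) 0 with hσ
  have hσ' : ∑ i, max (-W i) 0 = σ := by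
    have : ∑ i, (max (W i) 0 - max (-W i) 0) = 0 := by
      exact (Finset.sum_congr rfl fun i _ => hpm i).trans hW0
    rw [Finset.sum_sub_distrib] at this
    linarith
  have hσpos : 0 < σ := by
    rcases lt_or_gt_of_ne hWe with h | h
    · rw [← hσ']
      exact Finset.sum_pos' (fun i _ => le_max_right _ _)
        ⟨e, Finset.mem_univ _, lt_max_of_lt_left (by linarith)⟩
    · exact Finset.sum_pos' (fun i _ => le_max_right _ _)
        ⟨e, Finset.mem_univ _, lt_max_of_lt_left h⟩
  refine ⟨fun b i => if b then max (W i) 0 / σ else max (-W i) 0 / σ, ?_, ?_, ?_, ?_⟩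
  · intro b i
    cases b <;> simp <;> positivity
  · intro b
    cases b
    · simp only [Bool.false_eq_true, if_false]
      rw [← Finset.sum_div, hσ', div_self hσpos.ne']
    · simp only [if_true]
      rw [← Finset.sum_div, ← hσ, div_self hσpos.ne']
  · rw [← sub_eq_zero, ← Finset.sum_sub_distrib]
    have : ∀ i, (max (W i) 0 / σ) • p i - (max (-W i) 0 / σ) • p i = σ⁻¹ • (W i • p i) := by
      intro i
      rw [← sub_smul, smul_smul, ← sub_div, hpm i]
      congr 1
      field_simp
    simp only [Bool.false_eq_true, if_false, if_true, this]
    rw [← Finset.smul_sum, hWp, smul_zero]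
  · intro i
    rcases le_total (W i) 0 with h | h
    · left; simp [h]
    · right; simp [h]

/-! ### Whitney norms versus pointwise bounds -/

/-- All the quantities in the Whitney norm are bounded by `M`. -/
def WB (m : ℕ) {n d : ℕ} (S : Finset (En n))
    (P : En n → Fin d → MvPolynomial (Fin n) ℝ) (M : ℝ) : Prop :=
  (∀ x ∈ S, ∀ α : Fin n → ℕ, (∑ i, α i) ≤ m - 1 → ∀ j, |polyPDval α (P x j) x| ≤ M) ∧
    WSemiLE m S P M

lemma finite_multi (n k : ℕ) : {α : Fin n → ℕ | (∑ i, α i) ≤ k}.Finite :=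
  (Set.finite_Iic (fun _ : Fin n => k)).subset fun α hα i =>
    (Finset.single_le_sum (fun _ _ => Nat.zero_le _) (Finset.mem_univ i)).trans hα

lemma bdd_low (m : ℕ) {n d : ℕ} (S : Finset (En n))
    (P : En n → Fin d → MvPolynomial (Fin n) ℝ) :
    BddAbove {r : ℝ | ∃ x ∈ S, ∃ α : Fin n → ℕ, (∑ i, α i) ≤ m - 1 ∧ ∃ j : Fin d,
      r = |polyPDval α (P x j) x|} := by
  have h := ((S.finite_toSet.prod (finite_multi n (m - 1))).prod
    (Set.finite_univ (α := Fin d))).image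
      (fun q => |polyPDval q.1.2 (P q.1.1 q.2) q.1.1|)
  refine (h.subset ?_).bddAbove
  rintro r ⟨x, hx, α, hα, j, rfl⟩
  exact ⟨((x, α), j), ⟨⟨hx, hα⟩, trivial⟩, rfl⟩

lemma bdd_homog (m : ℕ) {n d : ℕ} (S : Finset (En n))
    (P : En n → Fin d → MvPolynomial (Fin n) ℝ) :
    BddAbove {r : ℝ | ∃ x ∈ S, ∃ y ∈ S, x ≠ y ∧ ∃ α : Fin n → ℕ, (∑ i, α i) ≤ m - 1 ∧
      ∃ j : Fin d, r = |polyPDval α (P x j - P y j) x| / dist x y ^ (m - ∑ i, α i)} := by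
  have h := (((S.finite_toSet.prod S.finite_toSet).prod (finite_multi n (m - 1))).prod
    (Set.finite_univ (α := Fin d))).image
      (fun q => |polyPDval q.1.2 (P q.1.1.1 q.2 - P q.1.1.2 q.2) q.1.1.1| /
        dist q.1.1.1 q.1.1.2 ^ (m - ∑ i, q.1.2 i))
  refine (h.subset ?_).bddAbove
  rintro r ⟨x, hx, y, hy, _, α, hα, j, rfl⟩
  exact ⟨(((x, y), α), j), ⟨⟨⟨hx, hy⟩, hα⟩, trivial⟩, rfl⟩

lemma WNormLow_nonneg (m : ℕ) {n d : ℕ} (S : Finset (En n))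
    (P : En n → Fin d → MvPolynomial (Fin n) ℝ) : 0 ≤ WNormLow m S P := by
  apply Real.sSup_nonneg
  rintro r ⟨x, hx, α, hα, j, rfl⟩
  positivity

lemma WNormHomog_nonneg (m : ℕ) {n d : ℕ} (S : Finset (En n))
    (P : En n → Fin d → MvPolynomial (Fin n) ℝ) : 0 ≤ WNormHomog m S P := by
  apply Real.sSup_nonneg
  rintro r ⟨x, hx, y, hy, _, α, hα, j, rfl⟩
  positivity

lemma WNormFull_nonneg (m : ℕ) {n d : ℕ} (S : Finset (En n))
    (P : En n → Fin d → MvPolynomial (Fin n) ℝ) : 0 ≤ WNormFull m S P :=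
  add_nonneg (WNormLow_nonneg m S P) (WNormHomog_nonneg m S P)

lemma WB_mono {m n d : ℕ} {S : Finset (En n)}
    {P : En n → Fin d → MvPolynomial (Fin n) ℝ} {M M' : ℝ} (h : WB m S P M) (hM : M ≤ M') :
    WB m S P M' := by
  refine ⟨fun x hx α hα j => (h.1 x hx α hα j).trans hM, fun x hx y hy hxy α hα j => ?_⟩
  exact (h.2 x hx y hy hxy α hα j).trans (by gcongr)

lemma WB_WNormFull (m : ℕ) {n d : ℕ} (S : Finset (En n))
    (P : En n → Fin d → MvPolynomial (Fin n) ℝ) : WB m S P (WNormFull m S P) := by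
  have h0 := WNormLow_nonneg m S P
  have h1 := WNormHomog_nonneg m S P
  constructor
  · intro x hx α hα j
    have : |polyPDval α (P x j) x| ≤ WNormLow m S P :=
      le_csSup (bdd_low m S P) ⟨x, hx, α, hα, j, rfl⟩
    unfold WNormFull
    linarith
  · intro x hx y hy hxy α hα j
    have h2 : |polyPDval α (P x j - P y j) x| / dist x y ^ (m - ∑ i, α i) ≤ WNormHomog m S P :=
      le_csSup (bdd_homog m S P) ⟨x, hx, y, hy, hxy, α, hα, j, rfl⟩
    have h3 : 0 < dist x y := dist_pos.mpr hxy
    rw [div_le_iff₀ (by positivity)] at h2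
    refine h2.trans ?_
    unfold WNormFull
    gcongr
    linarith

lemma WNormFull_le {m n d : ℕ} {S : Finset (En n)}
    {P : En n → Fin d → MvPolynomial (Fin n) ℝ} {M : ℝ} (hM : 0 ≤ M) (h : WB m S P M) :
    WNormFull m S P ≤ 2 * M := by
  have h1 : WNormLow m S P ≤ M := by
    apply Real.sSup_le _ hM
    rintro r ⟨x, hx, α, hα, j, rfl⟩
    exact h.1 x hx α hα j
  have h2 : WNormHomog m S P ≤ M := by
    apply Real.sSup_le _ hM
    rintro r ⟨x, hx, y, hy, hxy, α, hα, j, rfl⟩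
    have h3 : 0 < dist x y := dist_pos.mpr hxy
    rw [div_le_iff₀ (by positivity)]
    exact h.2 x hx y hy hxy α hα j
  unfold WNormFull
  linarith

lemma selNormFull_nonneg (m : ℕ) {n d : ℕ} (T : Finset (En n))
    (G : En n → Set (Fin d → MvPolynomial (Fin n) ℝ)) : 0 ≤ selNormFull m T G := by
  apply Real.sInf_nonneg
  rintro r ⟨P, _, rfl⟩
  exact WNormFull_nonneg m T P

lemma selNormFull_le {m n d : ℕ} {T : Finset (En n)}
    {G : En n → Set (Fin d → MvPolynomial (Fin n) ℝ)}
    {P : En n → Fin d → MvPolynomial (Fin n) ℝ} {M : ℝ} (hM : 0 ≤ M)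
    (hP : ∀ x ∈ T, P x ∈ G x) (h : WB m T P M) : selNormFull m T G ≤ 2 * M := by
  refine le_trans ?_ (WNormFull_le hM h)
  unfold selNormFull
  refine csInf_le ⟨0, ?_⟩ ⟨P, hP, rfl⟩
  rintro r ⟨P, _, rfl⟩
  exact WNormFull_nonneg m T P

lemma exists_selection (m : ℕ) {n d : ℕ} (T : Finset (En n))
    (G : En n → Set (Fin d → MvPolynomial (Fin n) ℝ)) (hG : ∀ x ∈ T, (G x).Nonempty)
    (ε : ℝ) (hε : 0 < ε) :
    ∃ P : En n → Fin d → MvPolynomial (Fin n) ℝ, (∀ x ∈ T, P x ∈ G x) ∧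
      WB m T P (selNormFull m T G + ε) := by
  have hne : {r : ℝ | ∃ P : En n → Fin d → MvPolynomial (Fin n) ℝ,
      (∀ x ∈ T, P x ∈ G x) ∧ r = WNormFull m T P}.Nonempty := by
    choose! g hg using hG
    exact ⟨_, g, hg, rfl⟩
  obtain ⟨r, ⟨P, hP, rfl⟩, hr⟩ := Real.lt_sInf_add_pos hne hε
  exact ⟨P, hP, WB_mono (WB_WNormFull m T P) hr.le⟩

/-! ### The Radon gluing step -/

lemma abs_avg_le {ι : Type*} [Fintype ι] (c a : ι → ℝ) (B : ℝ) (hc : ∀ i, 0 ≤ c i)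
    (hc1 : ∑ i, c i = 1) (ha : ∀ i, c i ≠ 0 → |a i| ≤ B) : |∑ i, c i * a i| ≤ B := by
  calc |∑ i, c i * a i| ≤ ∑ i, |c i * a i| := Finset.abs_sum_le_sum_abs _ _
    _ ≤ ∑ i, c i * B := by
        apply Finset.sum_le_sum
        intro i _
        rw [abs_mul, abs_of_nonneg (hc i)]
        by_cases h : c i = 0
        · simp [h]
        · exact mul_le_mul_of_nonneg_left (ha i h) (hc i)
    _ = B := by rw [← Finset.sum_mul, hc1, one_mul]

/-- The constant of the gluing step. -/
def glueConst (m n N : ℕ) : ℝ := (1 + taylorConst n m) * (N : ℝ) ^ m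

lemma glueConst_ge_one (m n N : ℕ) (hN : 0 < N) : 1 ≤ glueConst m n N := by
  have h1 : (1 : ℝ) ≤ (N : ℝ) ^ m := one_le_pow₀ (by exact_mod_cast hN)
  have h2 := taylorConst_nonneg n m
  unfold glueConst
  nlinarith

lemma glue {m n D N K : ℕ} (hm : 1 ≤ m) (hN : 0 < N)
    (hK : D * (n + (m - 1)).choose n ≤ K) (S : Finset (En n))
    (f : En n → ℕ)
    (hf2 : ∀ i ≤ K + 1, ∃ x ∈ S, f x = i)
    (hf3 : ∀ x ∈ S, ∀ y ∈ S, f x < f y → ∀ z ∈ S, ∀ w ∈ S, f x ≤ f z → f x ≤ f w →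
        dist z w ≤ N * dist x y)
    (hf1 : ∀ x ∈ S, f x ≤ K + 1)
    (G : En n → Set (Fin D → MvPolynomial (Fin n) ℝ))
    (hG : ∀ x ∈ S, Convex ℝ (G x) ∧ ∀ P ∈ G x, ∀ j, (P j).totalDegree ≤ m - 1)
    (P : Fin (K + 2) → En n → Fin D → MvPolynomial (Fin n) ℝ) (M : ℝ) (hM : 0 ≤ M)
    (hPG : ∀ i : Fin (K + 2), ∀ x ∈ S.filter (fun x => f x ≠ (i : ℕ)), P i x ∈ G x)
    (hPW : ∀ i : Fin (K + 2), WB m (S.filter (fun x => f x ≠ (i : ℕ))) (P i) M) :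
    ∃ R : En n → Fin D → MvPolynomial (Fin n) ℝ, (∀ x ∈ S, R x ∈ G x) ∧
      WB m S R (glueConst m n N * M) := by
  have hC1 := glueConst_ge_one m n N hN
  -- reference points
  obtain ⟨z, hz⟩ : ∃ z : Fin (K + 2) → En n, ∀ i : Fin (K + 2), z i ∈ S ∧ f (z i) ≠ (i : ℕ) ∧ K ≤ f (z i) := by
    obtain ⟨a, ha, hfa⟩ := hf2 (K + 1) le_rfl
    obtain ⟨b, hb, hfb⟩ := hf2 K (by omega)
    refine ⟨fun i => if (i : ℕ) = K + 1 then b else a, fun i => ?_⟩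
    by_cases hi : (i : ℕ) = K + 1
    · simp only [hi, if_true]
      exact ⟨hb, by omega, by omega⟩
    · simp only [hi, if_false]
      exact ⟨ha, by omega, by omega⟩
  have hzmem : ∀ i : Fin (K + 2), z i ∈ S.filter (fun x => f x ≠ (i : ℕ)) := fun i =>
    Finset.mem_filter.mpr ⟨(hz i).1, (hz i).2.1⟩
  have hdeg : ∀ i : Fin (K + 2), ∀ x ∈ S.filter (fun x => f x ≠ (i : ℕ)), ∀ j, (P i x j).totalDegree ≤ m - 1 :=
    fun i x hx j => (hG x (Finset.mem_filter.mp hx).1).2 _ (hPG i x hx) j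
  obtain ⟨c, hc0, hc1, hcp, hcz⟩ := exists_radon (fun i => P i (z i))
    (fun i j => hdeg i (z i) (hzmem i) j) hK
  have hb : ∀ k : ℕ, ∃ b : Bool, ∀ i : Fin (K + 2), k = i → c b i = 0 := by
    intro k
    by_cases hk : k < K + 2
    · rcases hcz ⟨k, hk⟩ with h | h
      · exact ⟨true, fun i hi => by subst hi; exact h⟩
      · exact ⟨false, fun i hi => by subst hi; exact h⟩
    · exact ⟨true, fun i hi => absurd i.2 (by omega)⟩
  choose b hb using hb
  have hmem : ∀ x ∈ S, ∀ i : Fin (K + 2), c (b (f x)) i ≠ 0 → x ∈ S.filter (fun x => f x ≠ (i : ℕ)) :=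
    fun x hx i hi => Finset.mem_filter.mpr ⟨hx, fun h => hi (hb _ i h)⟩
  refine ⟨fun x => ∑ i, c (b (f x)) i • P i x, ?_, ?_, ?_⟩
  · intro x hx
    have h1 : ∑ i, c (b (f x)) i • P i x
        = ∑ i ∈ Finset.univ.filter (fun i => c (b (f x)) i ≠ 0), c (b (f x)) i • P i x := by
      rw [Finset.sum_filter_of_ne]
      intro i _ h h0
      exact h (by rw [h0, zero_smul])
    beta_reduce
    rw [h1]
    refine (hG x hx).1.sum_mem (fun i _ => hc0 _ i) ?_ ?_
    · rw [Finset.sum_filter_ne_zero, hc1]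
    · intro i hi
      exact hPG i x (hmem x hx i (Finset.mem_filter.mp hi).2)
  · intro x hx α hα j
    rw [polyPDval_eq]
    simp only [Finset.sum_apply, Pi.smul_apply, map_sum, map_smul, smul_eq_mul]
    refine (abs_avg_le _ _ M (hc0 _) (hc1 _) ?_).trans (by nlinarith)
    intro i hi
    rw [← polyPDval_eq]
    exact (hPW i).1 x (hmem x hx i hi) α hα j
  · intro x hx y hy hxy α hα j
    have hd : 0 < dist x y := dist_pos.mpr hxy
    rw [polyPDval_eq]
    by_cases hbe : b (f x) = b (f y)
    · -- same convex combination
      have hfy := hmem y hy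
      simp only [← hbe] at hfy ⊢
      simp only [Finset.sum_apply, Pi.smul_apply, ← Finset.sum_sub_distrib, ← smul_sub,
        map_sum, map_smul, smul_eq_mul]
      refine (abs_avg_le _ _ (M * dist x y ^ (m - ∑ i, α i)) (hc0 _) (hc1 _) ?_).trans ?_
      · intro i hi
        rw [← polyPDval_eq]
        exact (hPW i).2 x (hmem x hx i hi) y (hfy i hi) hxy α hα j
      · gcongr
        nlinarith
    · -- different combinations: compare with the Radon point
      have hfne : f x ≠ f y := fun h => hbe (by rw [h])
      have hNd : dist x y ≤ N * dist x y := by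
        have : (1 : ℝ) ≤ N := by exact_mod_cast hN
        nlinarith
      have hfx := hf1 x hx
      have hfy := hf1 y hy
      have hdist : ∀ i : Fin (K + 2), dist x (z i) ≤ N * dist x y ∧ dist y (z i) ≤ N * dist x y := by
        intro i
        obtain ⟨hz1, _, hz3⟩ := hz i
        rcases lt_or_gt_of_ne hfne with h | h
        · exact ⟨hf3 x hx y hy h x hx _ hz1 le_rfl (by omega),
            hf3 x hx y hy h y hy _ hz1 h.le (by omega)⟩
        · rw [dist_comm x y]
          exact ⟨hf3 y hy x hx h x hx _ hz1 h.le (by omega),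
            hf3 y hy x hx h y hy _ hz1 le_rfl (by omega)⟩
      have hbase : ∀ i : Fin (K + 2), ∀ w ∈ S.filter (fun x => f x ≠ (i : ℕ)), dist w (z i) ≤ N * dist x y →
          ∀ β : Fin n → ℕ, (∑ i, β i) ≤ m - 1 →
          |polyPDval β (P i w j - P i (z i) j) w| ≤ M * (N * dist x y) ^ (m - ∑ i, β i) := by
        intro i w hw hwz β hβ
        by_cases hwe : w = z i
        · rw [← hwe, sub_self, polyPDval_eq, map_zero, abs_zero]
          positivity
        · refine ((hPW i).2 w hw (z i) (hzmem i) hwe β hβ j).trans ?_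
          gcongr
      have hcp' : ∀ b b' : Bool, ∑ i, c b i • P i (z i) j = ∑ i, c b' i • P i (z i) j := by
        have h := congrFun hcp j
        simp only [Finset.sum_apply, Pi.smul_apply] at h
        intro b b'
        cases b <;> cases b' <;> simp [h]
      have hsplit : (∑ i, c (b (f x)) i • P i x) j - (∑ i, c (b (f y)) i • P i y) j
          = ∑ i, c (b (f x)) i • (P i x j - P i (z i) j)
            - ∑ i, c (b (f y)) i • (P i y j - P i (z i) j) := by
        simp only [Finset.sum_apply, Pi.smul_apply, smul_sub, Finset.sum_sub_distrib]
        rw [hcp' (b (f x)) (b (f y))]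
        abel
      rw [hsplit]
      simp only [map_sub (pdvalL α x) (∑ i, c (b (f x)) i • (P i x j - P i (z i) j)),
        map_sum, map_smul, smul_eq_mul]
      set E := (N * dist x y) ^ (m - ∑ i, α i) with hE
      have hE0 : 0 ≤ E := by positivity
      have hT := taylorConst_nonneg n m
      have hI : |∑ i, c (b (f x)) i * pdvalL α x (P i x j - P i (z i) j)| ≤ M * E := by
        refine abs_avg_le _ _ _ (hc0 _) (hc1 _) ?_
        intro i hi
        rw [← polyPDval_eq]
        exact hbase i x (hmem x hx i hi) (hdist i).1 α hα
      have hJ : |∑ i, c (b (f y)) i * pdvalL α x (P i y j - P i (z i) j)|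
          ≤ taylorConst n m * M * E := by
        refine abs_avg_le _ _ _ (hc0 _) (hc1 _) ?_
        intro i hi
        rw [← polyPDval_eq]
        have hyi := hmem y hy i hi
        have hdg : (P i y j - P i (z i) j).totalDegree < m := by
          have h1 := MvPolynomial.totalDegree_sub (P i y j) (P i (z i) j)
          have h2 := hdeg i y hyi j
          have h3 := hdeg i (z i) (hzmem i) j
          have h4 := max_le h2 h3
          omega
        refine (taylor_shift m y _ hdg M (N * dist x y) (hbase i y hyi (hdist i).2)
          (m - ∑ i, α i) α (by omega) x hNd).trans ?_
        gcongr
        exact taylorConst_mono n (by omega)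
      refine (abs_sub _ _).trans ((add_le_add hI hJ).trans ?_)
      have hE2 : E ≤ (N : ℝ) ^ m * dist x y ^ (m - ∑ i, α i) := by
        rw [hE, mul_pow]
        gcongr
        · exact_mod_cast hN
        · omega
      calc M * E + taylorConst n m * M * E = (1 + taylorConst n m) * M * E := by ring
        _ ≤ (1 + taylorConst n m) * M * ((N : ℝ) ^ m * dist x y ^ (m - ∑ i, α i)) := by gcongr
        _ = _ := by unfold glueConst; ring

lemma one_step {m n D N : ℕ} (hm : 1 ≤ m) (hN : 0 < N) (S : Finset (En n))
    (hS : S.card ≤ N) (hcard : 2 ^ (D * Nat.choose (n + m - 1) n) < S.card)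
    (G : En n → Set (Fin D → MvPolynomial (Fin n) ℝ))
    (hG : ∀ x ∈ S, (G x).Nonempty ∧ Convex ℝ (G x) ∧
          ∀ P ∈ G x, ∀ j, (P j).totalDegree ≤ m - 1) :
    ∃ T : Finset (En n), T ⊂ S ∧
      selNormFull m S G ≤ 2 * glueConst m n N * selNormFull m T G := by
  set K := D * Nat.choose (n + m - 1) n with hK
  have hC1 := glueConst_ge_one m n N hN
  obtain ⟨f, hf1, hf2, hf3⟩ := exists_chain N (K + 1) S hS (by rw [pow_succ]; omega)
  obtain ⟨i₀, _, hi₀⟩ := Finset.exists_max_image (Finset.univ : Finset (Fin (K + 2)))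
    (fun i => selNormFull m (S.filter (fun x => f x ≠ i)) G) Finset.univ_nonempty
  refine ⟨S.filter (fun x => f x ≠ i₀), ?_, ?_⟩
  · rw [Finset.filter_ssubset]
    obtain ⟨x, hx, hfx⟩ := hf2 i₀ (by omega)
    exact ⟨x, hx, by simp [hfx]⟩
  · set s := selNormFull m (S.filter (fun x => f x ≠ i₀)) G with hs
    have hs0 : 0 ≤ s := selNormFull_nonneg _ _ _
    apply le_of_forall_pos_le_add
    intro ε hε
    set η := ε / (2 * glueConst m n N) with hη
    have hη0 : 0 < η := by positivity
    have hsel : ∀ i : Fin (K + 2), ∃ P : En n → Fin D → MvPolynomial (Fin n) ℝ,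
        (∀ x ∈ S.filter (fun x => f x ≠ i), P x ∈ G x) ∧
        WB m (S.filter (fun x => f x ≠ i)) P (s + η) := by
      intro i
      obtain ⟨P, hP, hW⟩ := exists_selection m (S.filter (fun x => f x ≠ i)) G
        (fun x hx => (hG x (Finset.mem_filter.mp hx).1).1) η hη0
      exact ⟨P, hP, WB_mono hW (by have := hi₀ i (Finset.mem_univ _); linarith)⟩
    choose P hP hW using hsel
    obtain ⟨R, hR, hRW⟩ := glue hm hN
      (by rw [hK, show n + (m - 1) = n + m - 1 by omega]) S f hf2 hf3 hf1 G
      (fun x hx => (hG x hx).2) P (s + η) (by positivity) hP hW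
    refine (selNormFull_le (by positivity) hR hRW).trans (le_of_eq ?_)
    rw [hη]
    field_simp

lemma iterate_step {m n D N : ℕ} (hm : 1 ≤ m) (hN : 0 < N) (k : ℕ) :
    ∀ S : Finset (En n), S.card ≤ N → S.card ≤ k →
    ∀ G : En n → Set (Fin D → MvPolynomial (Fin n) ℝ),
    (∀ x ∈ S, (G x).Nonempty ∧ Convex ℝ (G x) ∧
          ∀ P ∈ G x, ∀ j, (P j).totalDegree ≤ m - 1) →
    ∃ S' : Finset (En n), S' ⊆ S ∧ S'.card ≤ 2 ^ (D * Nat.choose (n + m - 1) n) ∧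
      selNormFull m S G ≤ (2 * glueConst m n N) ^ k * selNormFull m S' G := by
  have hC1 := glueConst_ge_one m n N hN
  induction k with
  | zero =>
    intro S _ h0 G _
    exact ⟨S, subset_rfl, h0.trans (Nat.zero_le _), by simp⟩
  | succ k ih =>
    intro S hSN hSk G hG
    by_cases hc : S.card ≤ 2 ^ (D * Nat.choose (n + m - 1) n)
    · refine ⟨S, subset_rfl, hc, ?_⟩
      exact le_mul_of_one_le_left (selNormFull_nonneg _ _ _) (one_le_pow₀ (by linarith))
    · obtain ⟨T, hTS, hT⟩ := one_step hm hN S hSN (not_le.mp hc) G hG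
      have hlt := Finset.card_lt_card hTS
      obtain ⟨S', hS', hS'c, hS'n⟩ := ih T (by omega) (by omega) G
        (fun x hx => hG x (hTS.1 hx))
      refine ⟨S', hS'.trans hTS.1, hS'c, hT.trans ?_⟩
      rw [pow_succ', mul_assoc (2 * glueConst m n N)]
      gcongr


/-- **Finiteness reduction for the inhomogeneous selection norm**: for `S` of at most `N`
points and diameter `≤ 1`, there is `S' ⊆ S` of at most `2^(dim 𝒫⃗)` points whose
selection norm controls that of `S`, with a constant depending only on `m, n, D, N`. -/
theorem selection_norm_finiteness_full
    (m n D : ℕ) (hm : 1 ≤ m) (hn : 1 ≤ n) (hD : 1 ≤ D) (N : ℕ) (hN : 0 < N) :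
    ∃ C : ℝ, 0 < C ∧
      ∀ S : Finset (En n), S.card ≤ N → (∀ x ∈ S, ∀ y ∈ S, dist x y ≤ 1) →
      ∀ G : En n → Set (Fin D → MvPolynomial (Fin n) ℝ),
        (∀ x ∈ S, (G x).Nonempty ∧ Convex ℝ (G x) ∧
          ∀ P ∈ G x, ∀ j, (P j).totalDegree ≤ m - 1) →
        ∃ S' : Finset (En n), S' ⊆ S ∧ S'.card ≤ 2 ^ (D * Nat.choose (n + m - 1) n) ∧
          selNormFull m S G ≤ C * selNormFull m S' G := by
  refine ⟨(2 * glueConst m n N) ^ N, ?_, ?_⟩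
  · have := glueConst_ge_one m n N hN
    positivity
  · intro S hS _ G hG
    exact iterate_step hm hN N S hS hS G hG
end
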